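/- Let X and Y be Polish spaces, μ a Borel probability measure on X and ν a Borel probability measure on Y. Let F : Y → ℝ^d be a Borel measurable function integrable with respect to ν, set g(p) = ∫_Y F(y) p(dy) for p ∈ 𝒫(Y) for which F is p-integrable, and let h : X × ℝ^d → ℝ be a Borel measurable function. Then the infimum of σ ↦ ∫_X h(x, g(σ^x)) μ(dx) over σ ∈ Π(μ,ν) equals the infimum of T ↦ ∫_X h(x, T(x)) μ(dx) over all Borel measurable maps T : X → ℝ^d such that μ∘T⁻¹ ≼_c ν∘F⁻¹. -/

import Mathlib

/-!
The two infima agree because the two sets of attained values agree. A coupling `σ` of `μ` and `ν`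
is matched with its barycentric map `T x = ∫ F dσ^x`, and the two costs are then the same integral.
In particular the real infima agree also when the values are unbounded below, where they are `0`
by convention.

*From `σ` to `T`* (`convexDom_barycenter`): Jensen's inequality on each fibre, integrated over `x`,
says that `μ∘T⁻¹` is dominated by `ν∘F⁻¹` in the convex order.

*From `T` to `σ`* (`exists_coupling_condMeas`): this is a version of Strassen's theorem on
martingale couplings, giving `σ` with `∫ F dσ^x = T x` for almost every `x`. Since standard Borel
spaces embed measurably into `[0, 1]`, it is enough to treat compact spaces `A` and `B`. There the
wanted `σ` is a positive functional on functions on `A × B` that takes the value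
`∫ f dμ + ∫ g dν + ∫ ⟪ψ, T⟫ dμ` at `f(a) + g(b) + ⟪ψ(a), F(b)⟫`. This prescription is positive
(`nonneg_of_convexDom`): if `f(a) + g(b) + ⟪ψ(a), F(b)⟫ ≥ 0` everywhere, the convex function
`φ(u) = sup_a (-f(a) - ⟪ψ(a), u⟫)` satisfies `φ ∘ F ≤ g`, and `-f - ⟪ψ, T⟫ ≤ φ ∘ T`, so
comparing `∫ φ ∘ T dμ ≤ ∫ φ ∘ F dν` gives the claim. The M. Riesz extension theorem and the
Riesz–Markov–Kakutani theorem then produce the measure (`exists_measure_integral_le`,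
`exists_coupling_of_compactSpace`), and testing against all continuous `ψ` identifies the
conditional barycentre with `T`
(`ae_eq_integral_condKernel_of_forall_continuousMap`).
-/

open MeasureTheory

noncomputable section

/-- The conditional measures `σ^x` of a probability measure `σ` on a product space with
respect to its first marginal, given by the disintegration `σ(dx dy) = σ^x(dy) μ(dx)`. -/
def condMeas {X Y : Type*} [MeasurableSpace X] [MeasurableSpace Y]
    [StandardBorelSpace Y] [Nonempty Y]
    (σ : ProbabilityMeasure (X × Y)) (x : X) : Measure Y :=
  (σ : Measure (X × Y)).condKernel x

/-- Convex dominance (convex order) `ζ ≼_c η` for Borel measures on a normed space: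
both measures have finite first moments and `∫ φ dζ ≤ ∫ φ dη` for every convex
function `φ` integrable with respect to `η`. -/
def ConvexDom {E : Type*} [NormedAddCommGroup E] [NormedSpace ℝ E] [MeasurableSpace E]
    (ζ η : Measure E) : Prop :=
  Integrable (fun u => ‖u‖) ζ ∧ Integrable (fun u => ‖u‖) η ∧
  ∀ φ : E → ℝ, ConvexOn ℝ Set.univ φ → Integrable φ η → ∫ u, φ u ∂ζ ≤ ∫ u, φ u ∂η

/-! ### Positivity from the convex order -/

open RealInnerProductSpace in
lemma MeasureTheory.Integrable.inner_continuousMap {A E Ω : Type*}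
    [TopologicalSpace A] [CompactSpace A] [MeasurableSpace A] [OpensMeasurableSpace A]
    [NormedAddCommGroup E] [InnerProductSpace ℝ E] [FiniteDimensional ℝ E]
    [MeasurableSpace Ω] {m : Measure Ω} {G : Ω → E} (hG : Integrable G m)
    {q : Ω → A} (hq : Measurable q) (ψ : C(A, E)) :
    Integrable (fun ω => ⟪ψ (q ω), G ω⟫) m := by
  borelize E
  refine (hG.norm.const_mul ‖ψ‖).mono'
    ((ψ.continuous.measurable.comp hq).aestronglyMeasurable.inner hG.1)
    (Filter.Eventually.of_forall fun a => ?_)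
  refine (abs_real_inner_le_norm _ _).trans ?_
  gcongr
  exact ψ.norm_coe_le_norm _

lemma ConvexDom.integrable_left {A E : Type*} [MeasurableSpace A] [NormedAddCommGroup E]
    [NormedSpace ℝ E] [FiniteDimensional ℝ E] [MeasurableSpace E] [BorelSpace E]
    {μ : Measure A} {η : Measure E} {T : A → E} (hT : Measurable T)
    (h : ConvexDom (μ.map T) η) : Integrable T μ :=
  (integrable_norm_iff hT.stronglyMeasurable.aestronglyMeasurable).1
    ((integrable_map_measure (by fun_prop) hT.aemeasurable).1 h.1)

open RealInnerProductSpace in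
/-- Positivity of the functional prescribed on the functions `f(a) + g(b) + ⟪ψ(a), F(b)⟫`. This is
where the convex order enters: it is tested on `φ(u) = sup_a (-f(a) - ⟪ψ(a), u⟫)`, a supremum of
affine functions, finite and of linear growth because `A` is compact. -/
lemma nonneg_of_convexDom {A B E : Type*} [TopologicalSpace A] [CompactSpace A]
    [MeasurableSpace A] [OpensMeasurableSpace A] [MeasurableSpace B]
    [NormedAddCommGroup E] [InnerProductSpace ℝ E] [FiniteDimensional ℝ E]
    [MeasurableSpace E] [BorelSpace E]
    {μ : Measure A} [IsProbabilityMeasure μ] {ν : Measure B} [IsProbabilityMeasure ν]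
    {T : A → E} {F : B → E} (hT : Measurable T) (hF : Measurable F)
    (hdom : ConvexDom (μ.map T) (ν.map F))
    (f : C(A, ℝ)) {g : B → ℝ} (hg : Integrable g ν) (ψ : C(A, E))
    (h : ∀ a b, 0 ≤ f a + g b + ⟪ψ a, F b⟫) :
    0 ≤ ∫ a, f a ∂μ + ∫ b, g b ∂ν + ∫ a, ⟪ψ a, T a⟫ ∂μ := by
  have hTi : Integrable T μ := hdom.integrable_left hT
  obtain ⟨hζ, hη, hconv⟩ := hdom
  have : IsProbabilityMeasure (μ.map T) := Measure.isProbabilityMeasure_map hT.aemeasurable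
  have : IsProbabilityMeasure (ν.map F) := Measure.isProbabilityMeasure_map hF.aemeasurable
  have : Nonempty A := nonempty_of_isProbabilityMeasure μ
  have hbd : ∀ u a, |-f a - ⟪ψ a, u⟫| ≤ ‖f‖ + ‖ψ‖ * ‖u‖ := by
    intro u a
    calc |-f a - ⟪ψ a, u⟫| ≤ |-f a| + |⟪ψ a, u⟫| := abs_sub _ _
      _ ≤ ‖f‖ + ‖ψ‖ * ‖u‖ := by
        rw [abs_neg]
        refine add_le_add (f.norm_coe_le_norm a) ((abs_real_inner_le_norm _ _).trans ?_)
        gcongr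
        exact ψ.norm_coe_le_norm a
  set φ : E → ℝ := fun u => ⨆ a, (-f a - ⟪ψ a, u⟫) with hφ
  have hbdd : ∀ u, BddAbove (Set.range fun a => -f a - ⟪ψ a, u⟫) := by
    intro u
    refine ⟨‖f‖ + ‖ψ‖ * ‖u‖, ?_⟩
    rintro _ ⟨a, rfl⟩
    exact (abs_le.1 (hbd u a)).2
  have hle : ∀ u a, -f a - ⟪ψ a, u⟫ ≤ φ u := fun u a => le_ciSup (hbdd u) a
  have hcvx : ConvexOn ℝ Set.univ φ := by
    refine ⟨convex_univ, fun u _ v _ s t hs ht hst => ciSup_le fun a => ?_⟩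
    have h1 := mul_le_mul_of_nonneg_left (hle u a) hs
    have h2 := mul_le_mul_of_nonneg_left (hle v a) ht
    have h3 : f a = s * f a + t * f a := by rw [← add_mul, hst, one_mul]
    simp only [inner_add_right, inner_smul_right, smul_eq_mul]
    linarith
  have hφc : Continuous φ := hcvx.locallyLipschitz.continuous
  have hφbd : ∀ u, |φ u| ≤ ‖f‖ + ‖ψ‖ * ‖u‖ := by
    intro u
    obtain ⟨a⟩ := ‹Nonempty A›
    exact abs_le.2 ⟨(abs_le.1 (hbd u a)).1.trans (hle u a),
      haveI : Nonempty A := ⟨a⟩; ciSup_le fun a => (abs_le.1 (hbd u a)).2⟩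
  have hφi : ∀ m : Measure E, IsProbabilityMeasure m → Integrable (fun u => ‖u‖) m →
      Integrable φ m := fun m _ hm =>
    ((integrable_const ‖f‖).add (hm.const_mul ‖ψ‖)).mono' hφc.aestronglyMeasurable
      (Filter.Eventually.of_forall hφbd)
  have key := hconv φ hcvx (hφi _ inferInstance hη)
  rw [integral_map hT.aemeasurable hφc.aestronglyMeasurable,
    integral_map hF.aemeasurable hφc.aestronglyMeasurable] at key
  have hfi : Integrable (fun a => f a) μ :=
    (integrable_const ‖f‖).mono' f.continuous.aestronglyMeasurable
      (Filter.Eventually.of_forall f.norm_coe_le_norm)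
  have hψT : Integrable (fun a => ⟪ψ a, T a⟫) μ := hTi.inner_continuousMap measurable_id ψ
  have h1 : ∫ a, (-f a - ⟪ψ a, T a⟫) ∂μ ≤ ∫ a, φ (T a) ∂μ :=
    integral_mono (hfi.neg.sub hψT)
      ((integrable_map_measure hφc.aestronglyMeasurable hT.aemeasurable).1
        (hφi _ inferInstance hζ)) fun a => hle _ a
  have h2 : ∫ b, φ (F b) ∂ν ≤ ∫ b, g b ∂ν :=
    integral_mono ((integrable_map_measure hφc.aestronglyMeasurable hF.aemeasurable).1
      (hφi _ inferInstance hη)) hg fun b => ciSup_le fun a => by linarith [h a b]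
  have h3 : ∫ a, (-f a - ⟪ψ a, T a⟫) ∂μ = -∫ a, f a ∂μ - ∫ a, ⟪ψ a, T a⟫ ∂μ := by
    rw [← integral_neg]
    exact integral_sub hfi.neg hψT
  linarith

/-! ### Barycentric maps of couplings -/

lemma MeasureTheory.Integrable.comp_snd_of_map_eq {X Y G : Type*} [MeasurableSpace X]
    [MeasurableSpace Y] [NormedAddCommGroup G] {ν : Measure Y} {σ : Measure (X × Y)}
    {k : Y → G} (hk : Integrable k ν) (h : σ.map Prod.snd = ν) :
    Integrable (fun p : X × Y => k p.2) σ := by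
  subst h
  exact hk.comp_measurable measurable_snd

/-- The barycentric map of a coupling is measurable and admissible for the Monge problem:
conditional Jensen inequality. -/
lemma convexDom_barycenter {X Y E : Type*} [MeasurableSpace X] [MeasurableSpace Y]
    [StandardBorelSpace Y] [Nonempty Y]
    [NormedAddCommGroup E] [InnerProductSpace ℝ E] [FiniteDimensional ℝ E]
    [MeasurableSpace E] [BorelSpace E]
    {μ : Measure X} {ν : Measure Y}
    {F : Y → E} (hF : Measurable F) (hFi : Integrable F ν)
    (σ : ProbabilityMeasure (X × Y))
    (h1 : (σ : Measure (X × Y)).map Prod.fst = μ) (h2 : (σ : Measure (X × Y)).map Prod.snd = ν) :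
    Measurable (fun x => ∫ y, F y ∂(condMeas σ x)) ∧
      ConvexDom (μ.map fun x => ∫ y, F y ∂(condMeas σ x)) (ν.map F) := by
  have hm : Measurable (fun x => ∫ y, F y ∂(condMeas σ x)) :=
    (hF.stronglyMeasurable.comp_measurable measurable_snd).integral_kernel_prod_right'
      (κ := (σ : Measure (X × Y)).condKernel) |>.measurable
  refine ⟨hm, ?_⟩
  have hfst : (σ : Measure (X × Y)).fst = μ := h1
  have hTi : Integrable (fun x => ∫ y, F y ∂(condMeas σ x)) μ := by
    have := (hFi.comp_snd_of_map_eq h2).integral_condKernel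
    rwa [hfst] at this
  refine ⟨?_, ?_, fun φ hφ hφi => ?_⟩
  · exact (integrable_map_measure (by fun_prop) hm.aemeasurable).2 hTi.norm
  · exact (integrable_map_measure (by fun_prop) hF.aemeasurable).2 hFi.norm
  have hφc : Continuous φ := hφ.locallyLipschitz.continuous
  have hφF : Integrable (fun y => φ (F y)) ν :=
    (integrable_map_measure hφc.aestronglyMeasurable hF.aemeasurable).1 hφi
  rw [integral_map hm.aemeasurable hφc.aestronglyMeasurable,
    integral_map hF.aemeasurable hφc.aestronglyMeasurable]
  have hIφ : Integrable (fun x => ∫ y, φ (F y) ∂(condMeas σ x)) μ := by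
    have := (hφF.comp_snd_of_map_eq h2).integral_condKernel
    rwa [hfst] at this
  have hJ : ∀ᵐ x ∂μ, φ (∫ y, F y ∂(condMeas σ x)) ≤ ∫ y, φ (F y) ∂(condMeas σ x) := by
    have e1 := (hFi.comp_snd_of_map_eq h2).condKernel_ae
    have e2 := (hφF.comp_snd_of_map_eq h2).condKernel_ae
    rw [hfst] at e1 e2
    filter_upwards [e1, e2] with x hx1 hx2
    have : IsProbabilityMeasure (condMeas σ x) := by unfold condMeas; infer_instance
    exact hφ.map_integral_le hφc.continuousOn isClosed_univ (by simp) hx1 hx2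
  have : IsProbabilityMeasure μ := h1 ▸ Measure.isProbabilityMeasure_map (by fun_prop)
  obtain ⟨l, c, hlc, -⟩ := hφ.exists_affine_le_of_lt (𝕜 := ℝ) (x := 0) (a := φ 0 - 1)
    (Set.mem_univ 0) (by linarith) isClosed_univ (lowerSemicontinuousOn_univ_iff.2 hφc.lowerSemicontinuous)
  have hlow : ∀ u, l u + c ≤ φ u := fun u => hlc ⟨u, trivial⟩
  -- With `T` the barycentric map, `φ ∘ T` lies between an affine function of `T` and the
  -- fibrewise integral of `φ ∘ F`; both are integrable, hence so is `φ ∘ T`.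
  have hφT : Integrable (fun x => φ (∫ y, F y ∂(condMeas σ x))) μ :=
    integrable_of_le_of_le (hφc.measurable.comp hm).aestronglyMeasurable
      (Filter.Eventually.of_forall fun x => hlow _) hJ
      ((l.integrable_comp hTi).add (integrable_const c)) hIφ
  refine (integral_mono_ae hφT hIφ hJ).trans_eq ?_
  have := Measure.integral_condKernel (hφF.comp_snd_of_map_eq h2)
  rw [hfst] at this
  rw [show ∫ x, ∫ y, φ (F y) ∂(condMeas σ x) ∂μ = _ from this]
  subst h2
  rw [integral_map (by fun_prop) hφF.1]

/-! ### Measures from positive functionals -/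

open CompactlySupported in
/-- A functional `L` that is positive with respect to `R : P → (K → ℝ)`, on a compact space `K`, is
represented by a finite measure in the weak sense that `∫ w dπ ≤ L p` whenever `w` is continuous
and `w ≤ R p`. The functions `R p` are not assumed measurable, so `R p` itself is not integrated. -/
lemma exists_measure_integral_le {P K : Type*} [AddCommGroup P] [Module ℝ P]
    [TopologicalSpace K] [CompactSpace K] [T2Space K] [MeasurableSpace K] [BorelSpace K]
    (R : P →ₗ[ℝ] (K → ℝ)) (L : P →ₗ[ℝ] ℝ) (hL : ∀ p, (∀ k, 0 ≤ R p k) → 0 ≤ L p)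
    (p₁ : P) (hp₁ : ∀ k, R p₁ k = 1) :
    ∃ π : Measure K, IsFiniteMeasure π ∧
      ∀ (p : P) (w : C(K, ℝ)), (∀ k, w k ≤ R p k) → ∫ k, w k ∂π ≤ L p := by
  -- The positive cone `{(p, w) | 0 ≤ R p + w}`; `L` is extended from `P × 0` to `P × C_c(K, ℝ)`.
  let S : PointedCone ℝ (P × C_c(K, ℝ)) :=
    { carrier := {x | ∀ k, 0 ≤ R x.1 k + x.2 k}
      add_mem' := by
        intro x y hx hy k
        have := add_nonneg (hx k) (hy k)
        simp only [Prod.fst_add, Prod.snd_add, map_add, Pi.add_apply,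
          CompactlySupportedContinuousMap.add_apply]
        linarith
      zero_mem' := by intro k; simp
      smul_mem' := by
        intro c x hx k
        have := mul_nonneg c.2 (hx k)
        have e : c • x = (c : ℝ) • x := rfl
        rw [e]
        simp only [Prod.smul_fst, Prod.smul_snd, map_smul, Pi.smul_apply,
          CompactlySupportedContinuousMap.smul_apply, smul_eq_mul]
        linarith }
  have hS : ∀ x, x ∈ S ↔ ∀ k, 0 ≤ R x.1 k + x.2 k := fun x => Iff.rfl
  let D : Submodule ℝ (P × C_c(K, ℝ)) := Submodule.prod ⊤ ⊥
  let f : (P × C_c(K, ℝ)) →ₗ.[ℝ] ℝ :=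
    ⟨D, (L.comp (LinearMap.fst ℝ P C_c(K, ℝ))).comp D.subtype⟩
  obtain ⟨G, hG, hGS⟩ := riesz_extension S f
    (by
      rintro ⟨⟨p, w⟩, hx⟩ hxs
      have hw : w = 0 := hx.2
      subst hw
      exact hL p fun k => by simpa using (hS _).1 hxs k)
    (by
      rintro ⟨p, w⟩
      -- The first component cancels `p`; the multiple of `p₁` is a constant dominating `-w`.
      refine ⟨⟨(-p + ‖w.toBoundedContinuousFunction‖ • p₁, 0), trivial, rfl⟩, ?_⟩
      rw [hS]
      intro k
      have := (abs_le.1 (w.toBoundedContinuousFunction.norm_coe_le_norm k)).1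
      simp only [CompactlySupportedContinuousMap.toBoundedContinuousFunction_apply] at this
      simp [hp₁]
      linarith)
  let Λ : C_c(K, ℝ) →ₚ[ℝ] ℝ := PositiveLinearMap.mk₀
    (G.comp (LinearMap.inr ℝ P C_c(K, ℝ))) (by
      intro w hw
      refine hGS _ ?_
      rw [hS]
      intro k
      simpa using hw k)
  refine ⟨RealRMK.rieszMeasure Λ, inferInstance, fun p w hw => ?_⟩
  let w' : C_c(K, ℝ) := ⟨w, HasCompactSupport.of_compactSpace _⟩
  have h1 : ∫ k, w k ∂(RealRMK.rieszMeasure Λ) = G (0, w') :=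
    RealRMK.integral_rieszMeasure Λ w'
  have h2 : G (p, 0) = L p := hG ⟨(p, 0), trivial, rfl⟩
  have h3 : 0 ≤ G (p, -w') := hGS _ ((hS _).2 fun k => by
    have : w' k = w k := rfl
    simp [this, hw k])
  have h4 : ((p, -w') : P × C_c(K, ℝ)) = (p, 0) - (0, w') := by simp
  rw [h4, map_sub, h2, ← h1] at h3
  linarith

/-! ### Strassen's theorem -/

open RealInnerProductSpace in
/-- Strassen's theorem on compact spaces in weak form: a coupling for which `F(b) - T(a)` is
orthogonal to every continuous function of `a`. -/
lemma exists_coupling_of_compactSpace {A B E : Type*}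
    [TopologicalSpace A] [CompactSpace A] [PolishSpace A] [MeasurableSpace A] [BorelSpace A]
    [TopologicalSpace B] [CompactSpace B] [PolishSpace B] [MeasurableSpace B] [BorelSpace B]
    [NormedAddCommGroup E] [InnerProductSpace ℝ E] [FiniteDimensional ℝ E]
    [MeasurableSpace E] [BorelSpace E]
    {μ : Measure A} [IsProbabilityMeasure μ] {ν : Measure B} [IsProbabilityMeasure ν]
    {T : A → E} {F : B → E} (hT : Measurable T) (hF : Measurable F) (hFi : Integrable F ν)
    (hdom : ConvexDom (μ.map T) (ν.map F)) :
    ∃ π : Measure (A × B), π.map Prod.fst = μ ∧ π.map Prod.snd = ν ∧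
      ∀ ψ : C(A, E), ∫ p, ⟪ψ p.1, F p.2⟫ ∂π = ∫ a, ⟪ψ a, T a⟫ ∂μ := by
  have hTi : Integrable T μ := hdom.integrable_left hT
  let _ := TopologicalSpace.upgradeIsCompletelyMetrizable A
  let _ := TopologicalSpace.upgradeIsCompletelyMetrizable B
  have hf (f : C(A, ℝ)) : Integrable (fun a => f a) μ :=
    (integrable_const ‖f‖).mono' f.continuous.aestronglyMeasurable
      (Filter.Eventually.of_forall f.norm_coe_le_norm)
  let I : Submodule ℝ (B → ℝ) :=
    { carrier := {g | Integrable g ν}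
      add_mem' := fun h h' => h.add h'
      zero_mem' := integrable_zero _ _ _
      smul_mem' := fun c _ h => h.smul c }
  let R : (C(A, ℝ) × I × C(A, E)) →ₗ[ℝ] (A × B → ℝ) :=
    { toFun := fun p q => p.1 q.1 + p.2.1.1 q.2 + ⟪p.2.2 q.1, F q.2⟫
      map_add' := by
        intro p p'
        ext q
        simp [inner_add_left]
        ring
      map_smul' := by
        intro c p
        ext q
        simp [inner_smul_left]
        ring }
  let L : (C(A, ℝ) × I × C(A, E)) →ₗ[ℝ] ℝ :=
    { toFun := fun p => ∫ a, p.1 a ∂μ + ∫ b, p.2.1.1 b ∂ν + ∫ a, ⟪p.2.2 a, T a⟫ ∂μ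
      map_add' := by
        intro p p'
        have e1 : ∫ a, (p + p').1 a ∂μ = ∫ a, p.1 a ∂μ + ∫ a, p'.1 a ∂μ :=
          integral_add (hf p.1) (hf p'.1)
        have e2 : ∫ b, (p + p').2.1.1 b ∂ν = ∫ b, p.2.1.1 b ∂ν + ∫ b, p'.2.1.1 b ∂ν :=
          integral_add p.2.1.2 p'.2.1.2
        have e3 : ∫ a, ⟪(p + p').2.2 a, T a⟫ ∂μ
            = ∫ a, ⟪p.2.2 a, T a⟫ ∂μ + ∫ a, ⟪p'.2.2 a, T a⟫ ∂μ := by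
          refine Eq.trans ?_ (integral_add (hTi.inner_continuousMap measurable_id p.2.2)
            (hTi.inner_continuousMap measurable_id p'.2.2))
          simp [inner_add_left]
        rw [e1, e2, e3]
        ring
      map_smul' := by
        intro c p
        have e1 : ∫ a, (c • p).1 a ∂μ = c * ∫ a, p.1 a ∂μ := integral_const_mul c _
        have e2 : ∫ b, (c • p).2.1.1 b ∂ν = c * ∫ b, p.2.1.1 b ∂ν := integral_const_mul c _
        have e3 : ∫ a, ⟪(c • p).2.2 a, T a⟫ ∂μ = c * ∫ a, ⟪p.2.2 a, T a⟫ ∂μ := by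
          rw [← integral_const_mul]
          simp [inner_smul_left]
        rw [e1, e2, e3]
        simp
        ring }
  obtain ⟨π, hπ, H⟩ := exists_measure_integral_le R L
    (fun p hp => nonneg_of_convexDom hT hF hdom p.1 p.2.1.2 p.2.2 fun a b => hp (a, b))
    (1, 0, 0) (by intro k; simp [R])
  have hfst : π.map Prod.fst = μ := by
    refine ext_of_forall_integral_eq_of_IsFiniteMeasure fun f => ?_
    have hle : ∀ f : C(A, ℝ), ∫ a, f a ∂(π.map Prod.fst) ≤ ∫ a, f a ∂μ := by
      intro f
      rw [integral_map (by fun_prop) f.continuous.aestronglyMeasurable]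
      have := H (f, 0, 0) (f.comp ⟨Prod.fst, continuous_fst⟩) (by intro k; simp [R])
      simpa [L] using this
    refine le_antisymm (hle f) ?_
    have := hle (-f)
    simpa [integral_neg] using this
  have hsnd : π.map Prod.snd = ν := by
    refine ext_of_forall_integral_eq_of_IsFiniteMeasure fun f => ?_
    have hle : ∀ f : C(B, ℝ), ∫ a, f a ∂(π.map Prod.snd) ≤ ∫ a, f a ∂ν := by
      intro f
      rw [integral_map (by fun_prop) f.continuous.aestronglyMeasurable]
      have hfi : Integrable f ν := (integrable_const ‖f‖).mono' f.continuous.aestronglyMeasurable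
        (Filter.Eventually.of_forall f.norm_coe_le_norm)
      have := H (0, ⟨f, hfi⟩, 0) (f.comp ⟨Prod.snd, continuous_snd⟩) (by intro k; simp [R])
      simpa [L] using this
    refine le_antisymm (hle f) ?_
    have := hle (-f)
    simpa [integral_neg] using this
  refine ⟨π, hfst, hsnd, ?_⟩
  have hle : ∀ ψ : C(A, E), ∫ p, ⟪ψ p.1, F p.2⟫ ∂π ≤ ∫ a, ⟪ψ a, T a⟫ ∂μ := by
    intro ψ
    refine le_of_forall_pos_le_add fun ε hε => ?_
    have hC : 0 < 2 * (‖ψ‖ + 1) := by positivity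
    -- `F` is only measurable, so it is replaced by a continuous `G` close to it in `L¹(ν)`; the
    -- error `‖ψ‖ * ‖F b - G b‖` is a function of `b` alone and goes into the slot of `g`.
    obtain ⟨G, hG, hGi⟩ := hFi.exists_boundedContinuous_integral_sub_le (div_pos hε hC)
    have hd : Integrable (fun b => ‖ψ‖ * ‖F b - G b‖) ν := ((hFi.sub hGi).norm).const_mul _
    have hin : ∀ a b, |⟪ψ a, F b - G b⟫| ≤ ‖ψ‖ * ‖F b - G b‖ := fun a b =>
      (abs_real_inner_le_norm _ _).trans (by gcongr; exact ψ.norm_coe_le_norm a)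
    let w : C(A × B, ℝ) := ⟨fun p => ⟪ψ p.1, G p.2⟫, by fun_prop⟩
    have h1 : ∫ p, ⟪ψ p.1, G p.2⟫ ∂π ≤ ∫ b, ‖ψ‖ * ‖F b - G b‖ ∂ν + ∫ a, ⟪ψ a, T a⟫ ∂μ := by
      have := H (0, ⟨_, hd⟩, ψ) w (by
        intro p
        have := (abs_le.1 (hin p.1 p.2)).1
        rw [inner_sub_right] at this
        simp [R, w]
        linarith)
      simpa [L, w] using this
    have h2 : ∫ p, ⟪ψ p.1, F p.2⟫ ∂π ≤
        ∫ p, ⟪ψ p.1, G p.2⟫ ∂π + ∫ b, ‖ψ‖ * ‖F b - G b‖ ∂ν := by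
      have e : ∫ b, ‖ψ‖ * ‖F b - G b‖ ∂ν = ∫ p, ‖ψ‖ * ‖F p.2 - G p.2‖ ∂π := by
        conv_lhs => rw [← hsnd]
        exact integral_map (by fun_prop) (hsnd ▸ hd.1)
      have i1 := (hFi.comp_snd_of_map_eq hsnd).inner_continuousMap measurable_fst ψ
      have i2 := (hGi.comp_snd_of_map_eq hsnd).inner_continuousMap measurable_fst ψ
      have i3 := hd.comp_snd_of_map_eq hsnd
      rw [e, ← integral_add i2 i3]
      refine integral_mono i1 (i2.add i3) fun p => ?_
      have := (abs_le.1 (hin p.1 p.2)).2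
      rw [inner_sub_right] at this
      simp
      linarith
    have h3 : ∫ b, ‖ψ‖ * ‖F b - G b‖ ∂ν ≤ ε / 2 := by
      rw [integral_const_mul]
      calc ‖ψ‖ * ∫ b, ‖F b - G b‖ ∂ν ≤ (‖ψ‖ + 1) * (ε / (2 * (‖ψ‖ + 1))) := by
            gcongr
            linarith
        _ = ε / 2 := by field_simp
    linarith
  intro ψ
  refine le_antisymm (hle ψ) ?_
  have := hle (-ψ)
  simpa [integral_neg] using this

open RealInnerProductSpace Filter Topology in
/-- The conditional expectation of `F` given the first coordinate is determined by its pairings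
with continuous functions of that coordinate. -/
lemma ae_eq_integral_condKernel_of_forall_continuousMap {A B E : Type*}
    [TopologicalSpace A] [CompactSpace A] [PolishSpace A] [MeasurableSpace A] [BorelSpace A]
    [MeasurableSpace B] [StandardBorelSpace B] [Nonempty B]
    [NormedAddCommGroup E] [InnerProductSpace ℝ E] [FiniteDimensional ℝ E]
    {π : Measure (A × B)} [IsFiniteMeasure π] {T : A → E} {F : A × B → E}
    (hT : Integrable T π.fst) (hF : Integrable F π)
    (h : ∀ ψ : C(A, E), ∫ p, ⟪ψ p.1, F p⟫ ∂π = ∫ a, ⟪ψ a, T a⟫ ∂π.fst) :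
    (fun a => ∫ b, F (a, b) ∂(π.condKernel a)) =ᵐ[π.fst] T := by
  let _ := TopologicalSpace.upgradeIsCompletelyMetrizable A
  have hm : Integrable (fun a => ∫ b, F (a, b) ∂(π.condKernel a)) π.fst := hF.integral_condKernel
  set D : A → E := fun a => ∫ b, F (a, b) ∂(π.condKernel a) - T a with hD
  have hDi : Integrable D π.fst := hm.sub hT
  have hψ : ∀ ψ : C(A, E), ∫ a, ⟪ψ a, D a⟫ ∂π.fst = 0 := by
    intro ψ
    have e1 := Measure.integral_condKernel (hF.inner_continuousMap measurable_fst ψ)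
    have e2 : ∫ a, ∫ b, ⟪ψ a, F (a, b)⟫ ∂(π.condKernel a) ∂π.fst
        = ∫ a, ⟪ψ a, ∫ b, F (a, b) ∂(π.condKernel a)⟫ ∂π.fst := by
      refine integral_congr_ae ?_
      filter_upwards [hF.condKernel_ae] with a ha
      exact integral_inner ha (ψ a)
    simp only [hD, inner_sub_right]
    have := integral_sub (hm.inner_continuousMap measurable_id ψ)
      (hT.inner_continuousMap measurable_id ψ)
    simp only [id] at this
    rw [this, ← e2, e1, h ψ, sub_self]
  suffices D =ᵐ[π.fst] 0 by
    filter_upwards [this] with a ha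
    exact sub_eq_zero.1 ha
  refine ae_eq_zero_of_forall_setIntegral_isClosed_eq_zero hDi fun s hs => ?_
  -- The indicator of the closed set `s` is a bounded pointwise limit of continuous functions.
  have hv : ∀ v : E, ∫ a in s, ⟪v, D a⟫ ∂π.fst = 0 := by
    intro v
    have hlim : Tendsto (fun n => ∫ a, (hs.apprSeq n a : ℝ) * ⟪v, D a⟫ ∂π.fst) atTop
        (𝓝 (∫ a, s.indicator (fun a => ⟪v, D a⟫) a ∂π.fst)) := by
      refine tendsto_integral_of_dominated_convergence (fun a => ‖⟪v, D a⟫‖) (fun n => ?_)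
        (hDi.const_inner v).norm (fun n => ae_of_all _ fun a => ?_) (ae_of_all _ fun a => ?_)
      · exact (NNReal.continuous_coe.comp (hs.apprSeq n).continuous).aestronglyMeasurable.mul
          (hDi.const_inner v).1
      · rw [norm_mul]
        refine mul_le_of_le_one_left (norm_nonneg _) ?_
        simpa using HasOuterApproxClosed.apprSeq_apply_le_one hs n a
      · have h1 := (tendsto_pi_nhds.1 (HasOuterApproxClosed.tendsto_apprSeq hs)) a
        have h2 := ((NNReal.continuous_coe.tendsto _).comp h1).mul_const ⟪v, D a⟫
        have h3 : s.indicator (fun a => ⟪v, D a⟫) a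
            = ((s.indicator (fun _ => (1 : NNReal)) a : NNReal) : ℝ) * ⟪v, D a⟫ := by
          by_cases ha : a ∈ s
          · rw [Set.indicator_of_mem ha, Set.indicator_of_mem ha, NNReal.coe_one, one_mul]
          · rw [Set.indicator_of_notMem ha, Set.indicator_of_notMem ha, NNReal.coe_zero, zero_mul]
        rw [h3]
        exact h2
    have hzero : ∀ n, ∫ a, (hs.apprSeq n a : ℝ) * ⟪v, D a⟫ ∂π.fst = 0 := by
      intro n
      have := hψ ⟨fun a => (hs.apprSeq n a : ℝ) • v,
        (NNReal.continuous_coe.comp (hs.apprSeq n).continuous).smul continuous_const⟩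
      simpa [inner_smul_left] using this
    simp only [hzero] at hlim
    rw [← integral_indicator hs.measurableSet]
    exact (tendsto_nhds_unique hlim tendsto_const_nhds)
  have := hv (∫ a in s, D a ∂π.fst)
  rwa [integral_inner hDi.integrableOn, inner_self_eq_zero] at this

/-- Strassen's theorem: if `μ∘T⁻¹` is dominated by `ν∘F⁻¹` in the convex order, some coupling of `μ`
and `ν` has `T` as its barycentric map. -/
lemma exists_coupling_condMeas {X Y E : Type*} [MeasurableSpace X] [StandardBorelSpace X]
    [MeasurableSpace Y] [StandardBorelSpace Y] [Nonempty Y]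
    [NormedAddCommGroup E] [InnerProductSpace ℝ E] [FiniteDimensional ℝ E]
    [MeasurableSpace E] [BorelSpace E]
    {μ : Measure X} [IsProbabilityMeasure μ] {ν : Measure Y} [IsProbabilityMeasure ν]
    {T : X → E} {F : Y → E} (hT : Measurable T) (hF : Measurable F) (hFi : Integrable F ν)
    (hdom : ConvexDom (μ.map T) (ν.map F)) :
    ∃ σ : ProbabilityMeasure (X × Y), (σ : Measure (X × Y)).map Prod.fst = μ ∧
      (σ : Measure (X × Y)).map Prod.snd = ν ∧
      (fun x => ∫ y, F y ∂(condMeas σ x)) =ᵐ[μ] T := by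
  have hTi : Integrable T μ := hdom.integrable_left hT
  have : Nonempty X := nonempty_of_isProbabilityMeasure μ
  -- Both spaces embed measurably into `[0, 1]`, with measurable left inverses; the coupling is
  -- built on `[0, 1] × [0, 1]` and pushed forward by the left inverses.
  have hi := measurableEmbedding_sigmoid_comp_embeddingReal X
  have hj := measurableEmbedding_sigmoid_comp_embeddingReal Y
  set i : X → unitInterval := unitInterval.sigmoid ∘ embeddingReal X
  set j : Y → unitInterval := unitInterval.sigmoid ∘ embeddingReal Y
  have hr : Measurable hi.invFun := by fun_prop
  have hs : Measurable hj.invFun := by fun_prop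
  have hri : ∀ x, hi.invFun (i x) = x := hi.leftInverse_invFun
  have hsj : ∀ y, hj.invFun (j y) = y := hj.leftInverse_invFun
  have : IsProbabilityMeasure (μ.map i) :=
    Measure.isProbabilityMeasure_map hi.measurable.aemeasurable
  have : IsProbabilityMeasure (ν.map j) :=
    Measure.isProbabilityMeasure_map hj.measurable.aemeasurable
  have hμ : (μ.map i).map hi.invFun = μ := by
    rw [Measure.map_map hr hi.measurable]
    convert Measure.map_id
    exact funext hri
  have hν : (ν.map j).map hj.invFun = ν := by
    rw [Measure.map_map hs hj.measurable]
    convert Measure.map_id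
    exact funext hsj
  have hFi' : Integrable (F ∘ hj.invFun) (ν.map j) := by
    rw [← hν] at hFi
    exact hFi.comp_measurable hs
  have hTi' : Integrable (T ∘ hi.invFun) (μ.map i) := by
    rw [← hμ] at hTi
    exact hTi.comp_measurable hr
  obtain ⟨π, hπ1, hπ2, hπ⟩ := exists_coupling_of_compactSpace (μ := μ.map i) (ν := ν.map j)
    (hT.comp hr) (hF.comp hs) hFi'
    (by rwa [← Measure.map_map hT hr, ← Measure.map_map hF hs, hμ, hν])
  have : IsProbabilityMeasure π := by
    have : IsProbabilityMeasure (π.map Prod.fst) := by rw [hπ1]; infer_instance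
    exact Measure.isProbabilityMeasure_of_map Prod.fst
  have hπf : π.fst = μ.map i := hπ1
  have hFπ : Integrable (fun p : unitInterval × unitInterval => F (hj.invFun p.2)) π :=
    hFi'.comp_snd_of_map_eq hπ2
  have hae := ae_eq_integral_condKernel_of_forall_continuousMap (π := π) (T := T ∘ hi.invFun)
    (F := fun p => F (hj.invFun p.2)) (by rwa [hπf]) hFπ (by rw [hπf]; exact hπ)
  have hrs : Measurable (Prod.map hi.invFun hj.invFun) := hr.prodMap hs
  have hσp : IsProbabilityMeasure (π.map (Prod.map hi.invFun hj.invFun)) :=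
    Measure.isProbabilityMeasure_map hrs.aemeasurable
  have hσ1 : (π.map (Prod.map hi.invFun hj.invFun)).map Prod.fst = μ := by
    rw [Measure.map_map measurable_fst hrs, Prod.map_fst',
      ← Measure.map_map hr measurable_fst, hπ1, hμ]
  have hσ2 : (π.map (Prod.map hi.invFun hj.invFun)).map Prod.snd = ν := by
    rw [Measure.map_map measurable_snd hrs, Prod.map_snd',
      ← Measure.map_map hs measurable_snd, hπ2, hν]
  refine ⟨⟨_, hσp⟩, hσ1, hσ2, ?_⟩
  have hσf : (π.map (Prod.map hi.invFun hj.invFun)).fst = μ := hσ1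
  have hFσ := hFi.comp_snd_of_map_eq hσ2
  have hmi := hFσ.integral_condKernel
  rw [hσf] at hmi
  -- A disintegration is not directly comparable with that of a pushforward, so the two sides are
  -- compared through their integrals over measurable sets `S ⊆ X`.
  refine Integrable.ae_eq_of_forall_setIntegral_eq _ _ hmi hTi fun S hS _ => ?_
  have e1 := Measure.setIntegral_condKernel_univ_right hS hFσ.integrableOn
  rw [hσf] at e1
  have e2 := Measure.setIntegral_condKernel_univ_right (hr hS) hFπ.integrableOn
  rw [setIntegral_congr_ae (hr hS) (hae.mono fun a ha _ => ha), hπf] at e2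
  refine e1.trans ?_
  refine (setIntegral_map (hS.prod MeasurableSet.univ)
    (hF.comp measurable_snd).aestronglyMeasurable hrs.aemeasurable).trans (e2.symm.trans ?_)
  conv_rhs => rw [← hμ]
  rw [setIntegral_map hS hT.aestronglyMeasurable hr.aemeasurable]
  rfl

/-! ### Equality of the infima -/

/-- **The nonlinear Kantorovich problem with cost `h(x, g(σ^x))`, `g(p) = ∫ F dp`, and the
Monge problem with convex dominance have equal infima.** Let `X, Y` be Polish spaces, `μ, ν`
Borel probability measures, `F : Y → ℝ^d` Borel measurable and `ν`-integrable,
`g(p) = ∫_Y F(y) p(dy)`, and `h : X × ℝ^d → ℝ` Borel measurable. Then the infimum of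
`σ ↦ ∫_X h(x, g(σ^x)) dμ` over `Π(μ,ν)` equals the infimum of `T ↦ ∫_X h(x, T(x)) dμ`
over all Borel maps `T : X → ℝ^d` with `μ∘T⁻¹ ≼_c ν∘F⁻¹`. -/
theorem inf_nonlinear_kantorovich_eq_inf_monge_convexDom
    {X Y : Type*} [MeasurableSpace X] [TopologicalSpace X] [PolishSpace X] [BorelSpace X]
    [MeasurableSpace Y] [TopologicalSpace Y] [PolishSpace Y] [BorelSpace Y] [Nonempty Y]
    (μ : Measure X) [IsProbabilityMeasure μ] (ν : Measure Y) [IsProbabilityMeasure ν]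
    {d : ℕ} (F : Y → EuclideanSpace ℝ (Fin d)) (hFmeas : Measurable F)
    (hFint : Integrable F ν)
    (h : X → EuclideanSpace ℝ (Fin d) → ℝ)
    (hh : Measurable (fun q : X × EuclideanSpace ℝ (Fin d) => h q.1 q.2)) :
    (⨅ σ : {σ : ProbabilityMeasure (X × Y) //
        (σ : Measure (X × Y)).map Prod.fst = μ ∧ (σ : Measure (X × Y)).map Prod.snd = ν},
      ∫ x, h x (∫ y, F y ∂(condMeas σ.1 x)) ∂μ) =
    (⨅ T : {T : X → EuclideanSpace ℝ (Fin d) //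
        Measurable T ∧ ConvexDom (μ.map T) (ν.map F)},
      ∫ x, h x (T.1 x) ∂μ) := by
  -- It suffices that the two ranges coincide, whatever the value of `sInf` on them.
  unfold iInf
  congr 1
  refine Set.Subset.antisymm ?_ ?_
  · rintro _ ⟨⟨σ, h1, h2⟩, rfl⟩
    exact ⟨⟨_, convexDom_barycenter hFmeas hFint σ h1 h2⟩, rfl⟩
  · rintro _ ⟨⟨T, hT, hdom⟩, rfl⟩
    obtain ⟨σ, h1, h2, hσ⟩ := exists_coupling_condMeas hT hFmeas hFint hdom
    refine ⟨⟨σ, h1, h2⟩, integral_congr_ae ?_⟩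
    filter_upwards [hσ] with x hx
    exact congrArg (h x) hx
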